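/- Let n ≥ 5, 2 < r ≤ n−2, and let (k_1,ℓ_1),…,(k_r,ℓ_r) be pairs with n−1 ≥ k_1 > … > k_r ≥ 2 and 2 = ℓ_1 < … < ℓ_r. Let B_1, B_2 be the first two associated sets of this corner sequence. If ℓ_2 ≤ r−2, then B_2 \ LexShad^{ℓ_2−2}(B_1) = {u ∈ A(k_2,ℓ_2) : x_{k_r}^{ℓ_2−1} x_{k_2+1} ≥_lex u ≥_lex x_{k_r} x_{k_{r−1}} ⋯ x_{k_{r−ℓ_2+3}} x_{k_{r−ℓ_2+2}−1} x_{k_2+1}}; if ℓ_2 > r−2, then B_2 \ LexShad^{ℓ_2−2}(B_1) = {u ∈ A(k_2,ℓ_2) : x_{k_r}^{ℓ_2−1} x_{k_2+1} ≥_lex u ≥_lex x_{k_r} x_{k_{r−1}} ⋯ x_{k_3} x_{k_2+1}^{ℓ_2−(r−2)}}. -/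

import Mathlib

namespace ExtremalBetti

/-- A monomial of `K[x_1,…,x_n]`, identified with its exponent vector in `ℕ^n`. -/
abbrev Mon (n : ℕ) := Fin n → ℕ

/-- The degree of a monomial. -/
def degree {n : ℕ} (u : Mon n) : ℕ := ∑ i, u i

/-- `m(u)`: the (1-based) index of the largest variable dividing `u`; `m(1) = 0`. -/
def maxVar {n : ℕ} (u : Mon n) : ℕ :=
  (Finset.univ.filter (fun i : Fin n => u i ≠ 0)).sup (fun i => (i : ℕ) + 1)

/-- The exponent vector of the variable `x_q` (1-based index `q`). -/
def X (n q : ℕ) : Mon n := fun i => if (i : ℕ) + 1 = q then 1 else 0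

/-- `lexLT u v` : `v` is strictly lex-greater than `u` (lex order induced by
`x_1 > x_2 > … > x_n`). -/
def lexLT {n : ℕ} (u v : Mon n) : Prop :=
  ∃ i : Fin n, (∀ j : Fin n, j < i → u j = v j) ∧ u i < v i

/-- `lexLE u v` : `v ≥_lex u`. -/
def lexLE {n : ℕ} (u v : Mon n) : Prop := u = v ∨ lexLT u v

/-- `L(top, bot)` in degree `d`: monomials `z` of degree `d` with `top ≥_lex z ≥_lex bot`. -/
def Lset {n : ℕ} (d : ℕ) (top bot : Mon n) : Set (Mon n) :=
  {z | degree z = d ∧ lexLE z top ∧ lexLE bot z}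

/-- `A(k,d)`: monomials of degree `d` with `m(u) = k+1`. -/
def A (n k d : ℕ) : Set (Mon n) := {u | degree u = d ∧ maxVar u = k + 1}

/-- The shadow of a set of monomials. -/
def shad {n : ℕ} (Ms : Set (Mon n)) : Set (Mon n) :=
  {z | ∃ u ∈ Ms, ∃ i : Fin n, z = u + Pi.single i 1}

/-- The `t`-fold iterated shadow. -/
def shadIter {n : ℕ} : ℕ → Set (Mon n) → Set (Mon n)
  | 0, Ms => Ms
  | t + 1, Ms => shad (shadIter t Ms)

/-- The lexicographic shadow `LexShad^t(𝔐) = L(x_1^{d+t}, w x_n^t)`, where `w` is the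
lex-smallest element of `𝔐` (empty if `𝔐` is empty or has no lex-smallest element). -/
def lexShad {n : ℕ} (t : ℕ) (Ms : Set (Mon n)) : Set (Mon n) :=
  {z | ∃ w ∈ Ms, (∀ v ∈ Ms, lexLE w v) ∧
      z ∈ Lset (degree w + t) ((degree w + t) • X n 1) (w + t • X n n)}

/-- A set of monomials is a monomial ideal iff it is upward closed under divisibility. -/
def IsMonIdeal {n : ℕ} (I : Set (Mon n)) : Prop :=
  ∀ u ∈ I, ∀ v : Mon n, (∀ i, u i ≤ v i) → v ∈ I

/-- `G(I)`: the minimal monomial generators of `I`. -/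
def minGens {n : ℕ} (I : Set (Mon n)) : Set (Mon n) :=
  {u ∈ I | ∀ v ∈ I, (∀ i, v i ≤ u i) → v = u}

/-- `G(I)_d`: the minimal generators of degree `d`. -/
def gens {n : ℕ} (I : Set (Mon n)) (d : ℕ) : Set (Mon n) :=
  {u ∈ minGens I | degree u = d}

/-- `I` is a strongly stable (monomial) ideal with `I ⊊ S` (i.e. `1 ∉ I`):
for every minimal generator `u`, every `i` with `x_i ∣ u` and every `j < i`,
`(x_j u)/x_i ∈ I`. -/
def StronglyStable {n : ℕ} (I : Set (Mon n)) : Prop :=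
  IsMonIdeal I ∧ (0 : Mon n) ∉ I ∧
    ∀ u ∈ minGens I, ∀ i : Fin n, u i ≠ 0 →
      ∀ j : Fin n, j < i → (u - Pi.single i 1 + Pi.single j 1) ∈ I

/-- The initial degree `α(I)` of the monomial ideal `I` equals `d`. -/
def initialDegree {n : ℕ} (I : Set (Mon n)) (d : ℕ) : Prop :=
  (∃ u ∈ I, degree u = d) ∧ ∀ u ∈ I, d ≤ degree u

/-- `(k,ℓ)` is a corner of `I`: `k, ℓ ≥ 1`, `k + 1 = max{m(u) : u ∈ G(I)_ℓ}`, and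
`m(u) ≤ k` for every `u ∈ G(I)_j` with `j > ℓ`. -/
def IsCorner {n : ℕ} (I : Set (Mon n)) (k ℓ : ℕ) : Prop :=
  1 ≤ k ∧ 1 ≤ ℓ ∧
  (∃ u ∈ gens I ℓ, maxVar u = k + 1) ∧
  (∀ u ∈ gens I ℓ, maxVar u ≤ k + 1) ∧
  (∀ j, ℓ < j → ∀ u ∈ gens I j, maxVar u ≤ k)

/-- The value of the corner `(k,ℓ)`: `|{u ∈ G(I)_ℓ : m(u) = k+1}|`. -/
noncomputable def cornerValue {n : ℕ} (I : Set (Mon n)) (k ℓ : ℕ) : ℕ :=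
  {u ∈ gens I ℓ | maxVar u = k + 1}.ncard

/-- The set of corners of `I`. -/
def corners {n : ℕ} (I : Set (Mon n)) : Set (ℕ × ℕ) :=
  {c | IsCorner I c.1 c.2}

/-- `(k,ℓ)` is a corner of the submodule `M = ⊕_j I_j e_j` of `S^m`. -/
def IsCornerMod {n m : ℕ} (I : Fin m → Set (Mon n)) (k ℓ : ℕ) : Prop :=
  1 ≤ k ∧ 1 ≤ ℓ ∧
  (∃ j, ∃ u ∈ gens (I j) ℓ, maxVar u = k + 1) ∧
  (∀ j, ∀ u ∈ gens (I j) ℓ, maxVar u ≤ k + 1) ∧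
  (∀ d, ℓ < d → ∀ j, ∀ u ∈ gens (I j) d, maxVar u ≤ k)

/-- The value of the corner `(k,ℓ)` of `M = ⊕_j I_j e_j`: the number of minimal
generators `u e_j` with `deg u = ℓ` and `m(u) = k+1`. -/
noncomputable def cornerValueMod {n m : ℕ} (I : Fin m → Set (Mon n)) (k ℓ : ℕ) : ℕ :=
  {p : Mon n × Fin m | p.1 ∈ gens (I p.2) ℓ ∧ maxVar p.1 = k + 1}.ncard

/-- The set of corners of the submodule `M = ⊕_j I_j e_j`. -/
def cornersMod {n m : ℕ} (I : Fin m → Set (Mon n)) : Set (ℕ × ℕ) :=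
  {c | IsCornerMod I c.1 c.2}

/-- `t = max{p : λ_p ≤ s − p}` (and `t = 0` if no such `p` exists). -/
def tVal (s : ℕ) (l : ℕ → ℕ) : ℕ :=
  ((Finset.Icc 1 s).filter (fun p => l p ≤ s - p)).sup id

/-- The associated sets `B_1, …, B_s` of the corner sequence
`(κ_1,λ_1), …, (κ_s,λ_s)` (given by `k, l : ℕ → ℕ` on indices `1,…,s`);
`B_0 = ∅`. -/
def assocB (n s : ℕ) (k l : ℕ → ℕ) (p : ℕ) : Set (Mon n) :=
  if p = 0 then ∅
  else if s = 1 then A n (k 1) (l 1)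
  else if p = s then {u ∈ A n (k s) (l s) | lexLE ((l s) • X n (k s + 1)) u}
  else if l 1 = 2 ∧ p = 1 then
    {u ∈ A n (k 1) 2 |
      lexLE (X n (if s = 2 then k 2 else k s - 1) + X n (k 1 + 1)) u}
  else if p ≤ tVal s l then
    {u ∈ A n (k p) (l p) |
      lexLE ((∑ j ∈ Finset.Icc (s - l p + 3) s, X n (k j)) +
          X n (k (s - l p + 2) - 1) + X n (k p + 1)) u}
  else
    {u ∈ A n (k p) (l p) |
      lexLE ((∑ j ∈ Finset.Icc (p + 1) s, X n (k j)) +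
          (l p - (s - p)) • X n (k p + 1)) u}

/-- The admissible bound `b_p = |B_p \ LexShad^{λ_p−λ_{p−1}}(B_{p−1})|` of the
`p`-th pair of the corner sequence. -/
noncomputable def admissibleBound (n s : ℕ) (k l : ℕ → ℕ) (p : ℕ) : ℕ :=
  (assocB n s k l p \ lexShad (l p - l (p - 1)) (assocB n s k l (p - 1))).ncard


theorem lexLE_iff {n : ℕ} (u v : Mon n) : lexLE u v ↔ toLex u ≤ toLex v := by
  rw [le_iff_eq_or_lt]; rfl

theorem lexLT_iff {n : ℕ} (u v : Mon n) : lexLT u v ↔ toLex u < toLex v := Iff.rfl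

theorem coord_le {n : ℕ} (u : Mon n) (i : Fin n) : u i ≤ degree u :=
  Finset.single_le_sum (f := u) (fun _ _ => Nat.zero_le _) (Finset.mem_univ i)

theorem coord_two {n : ℕ} (u : Mon n) (i j : Fin n) (h : i ≠ j) : u i + u j ≤ degree u := by
  rw [← Finset.sum_pair h]
  exact Finset.sum_le_sum_of_subset (Finset.subset_univ _)

theorem coord_three {n : ℕ} (u : Mon n) (i j m : Fin n) (h : i ≠ j) (h1 : i ≠ m) (h2 : j ≠ m) :
    u i + u j + u m ≤ degree u := by
  have : ∑ x ∈ ({i, j, m} : Finset (Fin n)), u x = u i + u j + u m := by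
    rw [Finset.sum_insert (by simp [h, h1]), Finset.sum_pair h2, add_assoc]
  rw [← this]
  exact Finset.sum_le_sum_of_subset (Finset.subset_univ _)

theorem maxVar_spec {n m : ℕ} (u : Mon n) (h : maxVar u = m + 1) :
    ∃ i : Fin n, (i : ℕ) = m ∧ u i ≠ 0 := by
  unfold maxVar at h
  have hne : (Finset.univ.filter (fun i : Fin n => u i ≠ 0)).Nonempty := by
    rw [Finset.nonempty_iff_ne_empty]
    intro h0
    rw [h0] at h
    simp at h
  obtain ⟨i, hi, he⟩ := Finset.exists_mem_eq_sup _ hne (fun i : Fin n => (i : ℕ) + 1)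
  rw [he] at h
  exact ⟨i, by simpa using h, (Finset.mem_filter.1 hi).2⟩

theorem degree_X {n q : ℕ} (h1 : 1 ≤ q) (h2 : q ≤ n) : degree (X n q) = 1 := by
  unfold degree X
  rw [Finset.sum_eq_single (⟨q - 1, by omega⟩ : Fin n)]
  · simp; omega
  · intro b _ hb
    rw [if_neg]
    intro h
    apply hb
    ext
    simp
    omega
  · simp

theorem degree_add {n : ℕ} (u v : Mon n) : degree (u + v) = degree u + degree v := by
  simp [degree, Finset.sum_add_distrib]

theorem maxVar_XX {n a b : ℕ} (h0 : 1 ≤ a) (h1 : a < b) (h2 : b ≤ n) :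
    maxVar (X n a + X n b) = b := by
  unfold maxVar
  apply le_antisymm
  · apply Finset.sup_le
    intro i hi
    have := (Finset.mem_filter.1 hi).2
    simp only [X, Pi.add_apply] at this
    split_ifs at this <;> omega
  · have := Finset.le_sup (s := Finset.univ.filter (fun i : Fin n => (X n a + X n b) i ≠ 0))
      (f := fun i : Fin n => (i : ℕ) + 1) (b := (⟨b - 1, by omega⟩ : Fin n))
      (by simp [X]; omega)
    simp only at this
    omega

theorem le_pow_one {n : ℕ} (hn : 0 < n) (u : Mon n) : lexLE u (degree u • X n 1) := by
  rw [lexLE_iff]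
  by_contra hc
  rw [not_le] at hc
  obtain ⟨i, hi, hlt⟩ := (lexLT_iff _ _).2 hc
  have h1 := coord_le u i
  by_cases h : (i : ℕ) = 0
  · simp [X, h] at hlt
    omega
  · have h2 := coord_two u ⟨0, hn⟩ i (by intro h'; apply h; rw [← h'])
    have h3 := hi ⟨0, hn⟩ (by rw [Fin.lt_def]; simp; omega)
    simp [X] at h3
    omega

/-- Monomials supported in variables of index at least `a` lie below `x_a^{d-1} x_b`. -/
theorem le_top {n a b : ℕ} (h0 : 1 ≤ a) (hab : a < b) (hb : b ≤ n) (u : Mon n)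
    (hm : maxVar u = b) (hz : ∀ i : Fin n, (i : ℕ) + 1 < a → u i = 0) :
    lexLE u ((degree u - 1) • X n a + X n b) := by
  rw [lexLE_iff]
  by_contra hc
  rw [not_le] at hc
  obtain ⟨i, hi, hlt⟩ := (lexLT_iff _ _).2 hc
  obtain ⟨j, hj, hu⟩ := maxVar_spec (m := b - 1) u (by omega)
  have ha : a - 1 < n := by omega
  have hia : a ≤ (i : ℕ) + 1 := by
    by_contra h
    have := hz i (by omega)
    omega
  have e1 : ((degree u - 1) • X n a + X n b) ⟨a - 1, ha⟩ = degree u - 1 := by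
    simp only [X, Pi.add_apply, Pi.smul_apply, smul_eq_mul]
    rw [if_pos (by omega), if_neg (by omega)]
    omega
  have e2 : ((degree u - 1) • X n a + X n b) j = 1 := by
    simp only [X, Pi.add_apply, Pi.smul_apply, smul_eq_mul]
    rw [if_neg (by omega), if_pos (by omega)]
    omega
  have haj : (⟨a - 1, ha⟩ : Fin n) ≠ j := by
    intro h; rw [Fin.ext_iff] at h; simp at h; omega
  have t1 := coord_two u _ j haj
  rcases Nat.lt_or_ge a ((i : ℕ) + 1) with h | h
  · have h3 := hi ⟨a - 1, ha⟩ (by rw [Fin.lt_def]; simp; omega)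
    rw [e1] at h3
    by_cases hij : i = j
    · subst hij
      rw [e2] at hlt
      omega
    · have hai : (⟨a - 1, ha⟩ : Fin n) ≠ i := by
        intro h; rw [Fin.ext_iff] at h; simp at h; omega
      have t2 := coord_three u _ i j hai haj hij
      omega
  · have : i = ⟨a - 1, ha⟩ := by ext; simp; omega
    subst this
    rw [e1] at hlt
    omega

theorem notMem_iff {n r : ℕ} (hr2 : 2 < r) (hr : r ≤ n - 2)
    (k l : ℕ → ℕ)
    (hk1 : k 1 ≤ n - 1) (hkr : 2 ≤ k r) (hl1 : l 1 = 2)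
    (h12 : k 2 < k 1) (h2r : k r < k 2) (hl2 : 2 < l 2) (u : Mon n)
    (hu : u ∈ A n (k 2) (l 2)) :
    u ∉ lexShad (l 2 - 2) (assocB n r k l 1) ↔
      lexLE u ((l 2 - 1) • X n (k r) + X n (k 2 + 1)) := by
  obtain ⟨hd, hm⟩ := hu
  have hB : assocB n r k l 1 = {u ∈ A n (k 1) 2 | lexLE (X n (k r - 1) + X n (k 1 + 1)) u} := by
    unfold assocB
    rw [if_neg (by omega), if_neg (by omega), if_neg (by omega), if_pos ⟨hl1, rfl⟩,
      if_neg (by omega)]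
  set w : Mon n := X n (k r - 1) + X n (k 1 + 1) with hw
  have hwd : degree w = 2 := by
    rw [hw, degree_add, degree_X (by omega) (by omega), degree_X (by omega) (by omega)]
  have hwB : w ∈ assocB n r k l 1 := by
    rw [hB]
    exact ⟨⟨hwd, maxVar_XX (by omega) (by omega) (by omega)⟩, Or.inl rfl⟩
  have hmem : u ∈ lexShad (l 2 - 2) (assocB n r k l 1) ↔ lexLE (w + (l 2 - 2) • X n n) u := by
    constructor
    · rintro ⟨w', hw', hmin, -, -, h⟩
      have e : w' = w := by
        have h1 := hmin w hwB
        have h2 : lexLE w w' := by rw [hB] at hw'; exact hw'.2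
        rw [lexLE_iff] at h1 h2
        exact toLex.injective (le_antisymm h1 h2)
      rwa [e] at h
    · intro h
      refine ⟨w, hwB, fun v hv => ?_, ?_, ?_, h⟩
      · rw [hB] at hv; exact hv.2
      · omega
      · have := le_pow_one (by omega) u
        rwa [show degree w + (l 2 - 2) = degree u by omega]
  rw [hmem]
  have hkn : k r - 2 < n := by omega
  constructor
  · intro h
    rw [lexLE_iff, not_le] at h
    obtain ⟨i, hi, hlt⟩ := (lexLT_iff _ _).2 h
    obtain ⟨j, hj, hu⟩ := maxVar_spec u hm
    have hwj : (w + (l 2 - 2) • X n n) j = 0 := by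
      simp only [hw, X, Pi.add_apply, Pi.smul_apply, smul_eq_mul]
      rw [if_neg (by omega), if_neg (by omega), if_neg (by omega)]
      rfl
    have hij : ¬ j < i := fun h => hu ((hi j h).trans hwj)
    rw [Fin.lt_def] at hij
    have hia : (i : ℕ) + 1 = k r - 1 := by
      by_contra hne
      have hi0 : (w + (l 2 - 2) • X n n) i = 0 := by
        simp only [hw, X, Pi.add_apply, Pi.smul_apply, smul_eq_mul]
        rw [if_neg (by omega), if_neg (by omega), if_neg (by omega)]
        rfl
      omega
    have hiv : (w + (l 2 - 2) • X n n) i = 1 := by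
      simp only [hw, X, Pi.add_apply, Pi.smul_apply, smul_eq_mul]
      rw [if_pos (by omega), if_neg (by omega), if_neg (by omega)]
      rfl
    rw [← hd]
    refine le_top (by omega) (by omega) (by omega) u hm (fun q hq => ?_)
    by_cases hqi : q = i
    · rw [hqi]; omega
    · rw [hi q (by rw [Fin.lt_def]; rw [Fin.ext_iff] at hqi; omega)]
      rw [Fin.ext_iff] at hqi
      simp only [hw, X, Pi.add_apply, Pi.smul_apply, smul_eq_mul]
      rw [if_neg (by omega), if_neg (by omega), if_neg (by omega)]
      rfl
  · intro h
    rw [lexLE_iff, not_le]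
    rw [lexLE_iff] at h
    refine lt_of_le_of_lt h ?_
    refine (lexLT_iff _ _).1 ?_
    refine ⟨⟨k r - 2, hkn⟩, fun j hj => ?_, ?_⟩
    · rw [Fin.lt_def] at hj
      simp only at hj
      simp only [hw, X, Pi.add_apply, Pi.smul_apply, smul_eq_mul]
      rw [if_neg (by omega), if_neg (by omega), if_neg (by omega), if_neg (by omega),
        if_neg (by omega)]
      simp
    · simp only [hw, X, Pi.add_apply, Pi.smul_apply, smul_eq_mul]
      rw [if_neg (by omega), if_neg (by omega), if_pos (by omega)]
      omega

/-- With the setting of Statement 9 and `B_1, B_2` the first two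
associated sets: if `ℓ_2 ≤ r−2`, then `B_2 \ LexShad^{ℓ_2−2}(B_1)` is the set of
`u ∈ A(k_2,ℓ_2)` with `x_{k_r}^{ℓ_2−1} x_{k_2+1} ≥_lex u ≥_lex
x_{k_r} ⋯ x_{k_{r−ℓ_2+3}} x_{k_{r−ℓ_2+2}−1} x_{k_2+1}`; if `ℓ_2 > r−2`, then it is
the set of `u ∈ A(k_2,ℓ_2)` with `x_{k_r}^{ℓ_2−1} x_{k_2+1} ≥_lex u ≥_lex
x_{k_r} ⋯ x_{k_3} x_{k_2+1}^{ℓ_2−(r−2)}`. -/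
theorem statement11 (n r : ℕ) (hn : 5 ≤ n) (hr2 : 2 < r) (hr : r ≤ n - 2)
    (k l : ℕ → ℕ)
    (hk1 : k 1 ≤ n - 1) (hkr : 2 ≤ k r) (hl1 : l 1 = 2)
    (hkdec : ∀ i j, 1 ≤ i → i < j → j ≤ r → k j < k i)
    (hlinc : ∀ i j, 1 ≤ i → i < j → j ≤ r → l i < l j) :
    (l 2 ≤ r - 2 →
      assocB n r k l 2 \ lexShad (l 2 - 2) (assocB n r k l 1) =
        {u ∈ A n (k 2) (l 2) |
          lexLE u ((l 2 - 1) • X n (k r) + X n (k 2 + 1)) ∧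
          lexLE ((∑ j ∈ Finset.Icc (r - l 2 + 3) r, X n (k j)) +
              X n (k (r - l 2 + 2) - 1) + X n (k 2 + 1)) u}) ∧
    (r - 2 < l 2 →
      assocB n r k l 2 \ lexShad (l 2 - 2) (assocB n r k l 1) =
        {u ∈ A n (k 2) (l 2) |
          lexLE u ((l 2 - 1) • X n (k r) + X n (k 2 + 1)) ∧
          lexLE ((∑ j ∈ Finset.Icc 3 r, X n (k j)) +
              (l 2 - (r - 2)) • X n (k 2 + 1)) u}) := by
  have hl2 : 2 < l 2 := by have := hlinc 1 2 le_rfl (by omega) (by omega); omega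
  have h12 := hkdec 1 2 le_rfl (by omega) (by omega)
  have h2r := hkdec 2 r (by omega) hr2 le_rfl
  have key := notMem_iff hr2 hr k l hk1 hkr hl1 h12 h2r hl2
  constructor
  · intro hle
    have ht : 2 ≤ tVal r l := by
      unfold tVal
      exact Finset.le_sup (f := id) (b := 2)
        (Finset.mem_filter.2 ⟨Finset.mem_Icc.2 ⟨by omega, by omega⟩, hle⟩)
    have hB : assocB n r k l 2 = {u ∈ A n (k 2) (l 2) |
        lexLE ((∑ j ∈ Finset.Icc (r - l 2 + 3) r, X n (k j)) +
          X n (k (r - l 2 + 2) - 1) + X n (k 2 + 1)) u} := by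
      rw [assocB, if_neg (by omega), if_neg (by omega), if_neg (by omega), if_neg (by omega),
        if_pos ht]
    ext u
    constructor
    · rintro ⟨hu, hn'⟩
      rw [hB] at hu
      exact ⟨hu.1, (key u hu.1).1 hn', hu.2⟩
    · rintro ⟨hu, h1, h2⟩
      refine ⟨?_, (key u hu).2 h1⟩
      rw [hB]
      exact ⟨hu, h2⟩
  · intro hgt
    have ht : ¬ 2 ≤ tVal r l := by
      rw [not_le]
      unfold tVal
      rw [Finset.sup_lt_iff (by simp)]
      intro p hp
      obtain ⟨hp1, hp2⟩ := Finset.mem_filter.1 hp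
      rw [Finset.mem_Icc] at hp1
      by_contra hc
      simp only [id, not_lt] at hc
      rcases Nat.eq_or_lt_of_le hc with h | h
      · rw [← h] at hp2; omega
      · have := hlinc 2 p (by omega) h hp1.2
        omega
    have hB : assocB n r k l 2 = {u ∈ A n (k 2) (l 2) |
        lexLE ((∑ j ∈ Finset.Icc 3 r, X n (k j)) +
              (l 2 - (r - 2)) • X n (k 2 + 1)) u} := by
      rw [assocB, if_neg (by omega), if_neg (by omega), if_neg (by omega), if_neg (by omega),
        if_neg ht]
    ext u
    constructor
    · rintro ⟨hu, hn'⟩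
      rw [hB] at hu
      exact ⟨hu.1, (key u hu.1).1 hn', hu.2⟩
    · rintro ⟨hu, h1, h2⟩
      refine ⟨?_, (key u hu).2 h1⟩
      rw [hB]
      exact ⟨hu, h2⟩

end ExtremalBetti
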